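/- With the IX parameter set to γ = √(log(2|Π|/δ)/n), with probability at least 1-δ the policy ĥπ_n = argmax_{π∈Π} ṽ_n(π) satisfies, simultaneously for every comparator π* ∈ Π, v(π*) - v(ĥπ_n) ≤ (2·C_γ(π*) + 1)·√(log(2|Π|/δ)/n). -/

import Mathlib

/-!
For each policy, exponential moments of the IX term control both tails of the estimator.

* Upper tail: `z / (1 + z / 2) ≤ log (1 + z)` gives `μ exp (2γu / (μ + γ)) ≤ μ + 2γu` for
  `u ∈ [0, 1]` (`mul_exp_ix_le`), hence `E exp (2γ r̃(π)) ≤ 1 + 2γ v(π) ≤ exp (2γ v(π))`.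
* Lower tail: `exp (-x) ≤ 1 - x + x² / 2` gives
  `μ exp (-2γu / (μ + γ)) ≤ μ - 2γu + 4γ²u / (μ + γ)` (`mul_exp_neg_ix_le`), hence
  `E exp (-2γ r̃(π)) ≤ exp (-2γ v(π) + 4γ² C_γ(π))`.

Both are instances of `lintegral_exp_ixTerm_le`. With `L = log (2|Π|/δ) = n γ²`, Chernoff's method
(`dataLaw_tail_le`) and a union bound over `2|Π|` events of probability at most `δ / (2|Π|)` give,
with probability at least `1 - δ` and for all `π ∈ Π` at once, `ṽ(π) ≤ v(π) + γ/2` and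
`v(π) ≤ ṽ(π) + 2γ C_γ(π) + γ/2`. The regret bound follows by applying the first to the maximiser
and the second to the comparator.
-/

open MeasureTheory ProbabilityTheory

/-- A stochastic contextual bandit instance: context distribution `ν`, behavior policy `μb`,
reward kernel `rker` supported on `[0,1]`, and mean reward function `r`. -/
structure CBSetup (𝓧 𝓐 : Type*) [MeasurableSpace 𝓧] [Fintype 𝓐] [MeasurableSpace 𝓐] where
  /-- the context distribution -/
  ν : Measure 𝓧
  ν_prob : IsProbabilityMeasure ν
  /-- the behavior policy `μ(a|x)` -/
  μb : 𝓧 → 𝓐 → ℝ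
  μb_nonneg : ∀ x a, 0 ≤ μb x a
  μb_sum_one : ∀ x, ∑ a, μb x a = 1
  μb_meas : ∀ a, Measurable fun x => μb x a
  /-- the reward kernel `p(·|x,a)` -/
  rker : 𝓧 → 𝓐 → Measure ℝ
  rker_prob : ∀ x a, IsProbabilityMeasure (rker x a)
  rker_supp : ∀ x a, rker x a (Set.Icc (0:ℝ) 1)ᶜ = 0
  rker_meas : ∀ a, Measurable fun x => rker x a
  /-- the mean reward `r(x,a)` -/
  r : 𝓧 → 𝓐 → ℝ
  r_def : ∀ x a, r x a = ∫ ρ, ρ ∂(rker x a)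
  r_meas : ∀ a, Measurable fun x => r x a

variable {𝓧 𝓐 : Type*} [MeasurableSpace 𝓧] [Fintype 𝓐] [MeasurableSpace 𝓐]
  [MeasurableSingletonClass 𝓐]

/-- The law of a single observation `(X, A, R)` with `X ~ ν`, `A ~ μ(·|X)`, `R ~ p(·|X,A)`. -/
noncomputable def obsLaw (S : CBSetup 𝓧 𝓐) : Measure (𝓧 × 𝓐 × ℝ) :=
  S.ν.bind fun x => Measure.sum fun a =>
    ENNReal.ofReal (S.μb x a) • (S.rker x a).map fun ρ => (x, a, ρ)

/-- The law of the i.i.d. dataset `(X_t, A_t, R_t)_{t=1}^n`. -/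
noncomputable def dataLaw (S : CBSetup 𝓧 𝓐) (n : ℕ) : Measure (Fin n → 𝓧 × 𝓐 × ℝ) :=
  Measure.pi fun _ : Fin n => obsLaw S

/-- A (stochastic, measurable) policy: a map from contexts to distributions over actions. -/
def IsPolicy (π : 𝓧 → 𝓐 → ℝ) : Prop :=
  (∀ x a, 0 ≤ π x a) ∧ (∀ x, ∑ a, π x a = 1) ∧ (∀ a, Measurable fun x => π x a)

/-- The value `v(π) = E[Σ_a π(a|X) r(X,a)]` of a policy. -/
noncomputable def pval (S : CBSetup 𝓧 𝓐) (π : 𝓧 → 𝓐 → ℝ) : ℝ :=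
  ∫ x, ∑ a, π x a * S.r x a ∂S.ν

/-- The smoothed coverage ratio `C_γ(π) = E[Σ_a π(a|X) r(X,a)/(μ(a|X)+γ)]`. -/
noncomputable def covγ (S : CBSetup 𝓧 𝓐) (γ : ℝ) (π : 𝓧 → 𝓐 → ℝ) : ℝ :=
  ∫ x, ∑ a, π x a * S.r x a / (S.μb x a + γ) ∂S.ν

/-- The IX reward estimate `r̃(π) = π(A|X) R / (μ(A|X) + γ)` for one observation `ω = (X,A,R)`. -/
noncomputable def ixTerm (S : CBSetup 𝓧 𝓐) (γ : ℝ) (π : 𝓧 → 𝓐 → ℝ) (ω : 𝓧 × 𝓐 × ℝ) : ℝ :=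
  π ω.1 ω.2.1 * ω.2.2 / (S.μb ω.1 ω.2.1 + γ)

/-- The IX value estimator `ṽ_n(π) = (1/n) Σ_t π(A_t|X_t) R_t / (μ(A_t|X_t) + γ)`. -/
noncomputable def ixEst (S : CBSetup 𝓧 𝓐) (γ : ℝ) {n : ℕ} (π : 𝓧 → 𝓐 → ℝ)
    (D : Fin n → 𝓧 × 𝓐 × ℝ) : ℝ :=
  (∑ t, ixTerm S γ π (D t)) / n

/-! ### Elementary inequalities -/

/-- The implicit-exploration inequality: it is `z / (1 + z / 2) ≤ log (1 + z)` at
`z = 2 γ u / m`, multiplied out so that it remains meaningful when `m = 0`. -/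
lemma mul_exp_ix_le {m γ u : ℝ} (hm : 0 ≤ m) (hγ : 0 < γ) (hu0 : 0 ≤ u) (hu1 : u ≤ 1) :
    m * Real.exp (2 * γ * (u / (m + γ))) ≤ m + 2 * γ * u := by
  rcases hm.eq_or_lt with rfl | hm
  · simp only [zero_mul, zero_add]; positivity
  have hz : 0 ≤ 2 * γ * u / m := by positivity
  have h1 : 2 * γ * (u / (m + γ)) ≤ Real.log (1 + 2 * γ * u / m) := by
    refine le_trans ?_ (Real.le_log_one_add_of_nonneg hz)
    have e : 2 * (2 * γ * u / m) / (2 * γ * u / m + 2) = 2 * γ * u / (m + γ * u) := by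
      field_simp
      ring
    rw [e, ← mul_div_assoc]
    have : γ * u ≤ γ := by nlinarith
    gcongr
  have h2 : Real.exp (2 * γ * (u / (m + γ))) ≤ 1 + 2 * γ * u / m := by
    rw [← Real.exp_log (show 0 < 1 + 2 * γ * u / m by positivity)]
    exact Real.exp_le_exp.2 h1
  calc m * Real.exp (2 * γ * (u / (m + γ))) ≤ m * (1 + 2 * γ * u / m) := by gcongr
    _ = m + 2 * γ * u := by field_simp

lemma exp_neg_le_quadratic {x : ℝ} (hx : 0 ≤ x) : Real.exp (-x) ≤ 1 - x + x ^ 2 / 2 := by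
  have h := Real.quadratic_le_exp_of_nonneg hx
  rw [Real.exp_neg, inv_le_iff_one_le_mul₀ (Real.exp_pos x)]
  have hp : 0 ≤ 1 - x + x ^ 2 / 2 := by nlinarith [sq_nonneg (x - 1)]
  -- `(1 - x + x² / 2) (1 + x + x² / 2) = 1 + x⁴ / 4`
  nlinarith [mul_le_mul_of_nonneg_left h hp, sq_nonneg (x ^ 2)]

/-- The lower-tail counterpart of `mul_exp_ix_le`. The coefficient of `u` collects the bias of the
IX estimate and its second moment, each of which contributes `2 γ² / (m + γ)`. -/
lemma mul_exp_neg_ix_le {m γ u : ℝ} (hm : 0 ≤ m) (hγ : 0 < γ) (hu0 : 0 ≤ u) (hu1 : u ≤ 1) :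
    m * Real.exp (-(2 * γ) * (u / (m + γ))) ≤ m + (4 * γ ^ 2 / (m + γ) - 2 * γ) * u := by
  have hp : 0 < m + γ := by positivity
  have h := exp_neg_le_quadratic (x := 2 * γ * (u / (m + γ))) (by positivity)
  rw [neg_mul]
  refine (mul_le_mul_of_nonneg_left h hm).trans ?_
  have key : m + (4 * γ ^ 2 / (m + γ) - 2 * γ) * u
      - m * (1 - 2 * γ * (u / (m + γ)) + (2 * γ * (u / (m + γ))) ^ 2 / 2)
      = 2 * γ ^ 2 * u * (m * (1 - u) + γ) / (m + γ) ^ 2 := by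
    field_simp
    ring
  have : 0 ≤ 2 * γ ^ 2 * u * (m * (1 - u) + γ) / (m + γ) ^ 2 := by
    have : 0 ≤ 1 - u := by linarith
    positivity
  linarith

/-! ### The law of one observation -/

lemma lintegral_obsLaw (S : CBSetup 𝓧 𝓐) {f : 𝓧 × 𝓐 × ℝ → ENNReal} (hf : Measurable f) :
    ∫⁻ ω, f ω ∂(obsLaw S)
      = ∫⁻ x, ∑ a, ENNReal.ofReal (S.μb x a) * ∫⁻ ρ, f (x, a, ρ) ∂(S.rker x a) ∂S.ν := by
  have hmk : ∀ (x : 𝓧) (a : 𝓐), Measurable fun ρ : ℝ => (x, a, ρ) := fun x a => by fun_prop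
  have hmeas : Measurable fun x => Measure.sum fun a =>
      ENNReal.ofReal (S.μb x a) • (S.rker x a).map fun ρ => (x, a, ρ) := by
    refine Measure.measurable_of_measurable_coe _ fun s hs => ?_
    simp only [Measure.sum_fintype, Measure.finsetSum_apply, Measure.smul_apply, smul_eq_mul]
    refine Finset.measurable_sum _ fun a _ => ?_
    refine (S.μb_meas a).ennreal_ofReal.mul ?_
    let κ : Kernel 𝓧 ℝ := ⟨fun x => S.rker x a, S.rker_meas a⟩
    have : IsMarkovKernel κ := ⟨fun x => S.rker_prob x a⟩
    have ht : MeasurableSet ((fun p : 𝓧 × ℝ => (p.1, a, p.2)) ⁻¹' s) :=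
      (show Measurable fun p : 𝓧 × ℝ => (p.1, a, p.2) by fun_prop) hs
    have h := Kernel.measurable_kernel_prodMk_left (κ := κ) ht
    have e : (fun x => (S.rker x a).map (fun ρ => (x, a, ρ)) s)
        = fun x => κ x (Prod.mk x ⁻¹' ((fun p : 𝓧 × ℝ => (p.1, a, p.2)) ⁻¹' s)) := by
      funext x
      rw [Measure.map_apply (hmk x a) hs]
      rfl
    rw [e]
    exact h
  rw [obsLaw, Measure.lintegral_bind hmeas.aemeasurable hf.aemeasurable]
  refine lintegral_congr fun x => ?_
  rw [lintegral_sum_measure, tsum_fintype]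
  refine Finset.sum_congr rfl fun a _ => ?_
  rw [lintegral_smul_measure, lintegral_map hf (hmk x a), smul_eq_mul]

lemma isProbabilityMeasure_obsLaw (S : CBSetup 𝓧 𝓐) : IsProbabilityMeasure (obsLaw S) := by
  have := S.ν_prob
  have := S.rker_prob
  constructor
  rw [← lintegral_one, lintegral_obsLaw S measurable_const]
  simp only [lintegral_one, measure_univ, mul_one]
  have : ∀ x, ∑ a, ENNReal.ofReal (S.μb x a) = 1 := fun x => by
    rw [← ENNReal.ofReal_sum_of_nonneg fun a _ => S.μb_nonneg x a, S.μb_sum_one,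
      ENNReal.ofReal_one]
  simp [this]

lemma measurable_ixTerm (S : CBSetup 𝓧 𝓐) (γ : ℝ) {π : 𝓧 → 𝓐 → ℝ} (hπ : IsPolicy π) :
    Measurable (ixTerm S γ π) := by
  have aux : ∀ f : 𝓧 → 𝓐 → ℝ, (∀ a, Measurable fun x => f x a) →
      Measurable fun ω : 𝓧 × 𝓐 × ℝ => f ω.1 ω.2.1 := fun f hf =>
    (measurable_from_prod_countable_left (f := fun p : 𝓧 × 𝓐 => f p.1 p.2) hf).comp
      (show Measurable fun ω : 𝓧 × 𝓐 × ℝ => (ω.1, ω.2.1) by fun_prop)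
  have h1 := aux π hπ.2.2
  have h2 := aux S.μb S.μb_meas
  exact (h1.mul measurable_snd.snd).div (h2.add_const γ)

lemma rker_ae_mem (S : CBSetup 𝓧 𝓐) (x : 𝓧) (a : 𝓐) :
    ∀ᵐ ρ ∂(S.rker x a), ρ ∈ Set.Icc (0:ℝ) 1 := S.rker_supp x a

lemma integrable_rker (S : CBSetup 𝓧 𝓐) (x : 𝓧) (a : 𝓐) :
    Integrable (fun ρ : ℝ => ρ) (S.rker x a) := by
  have := S.rker_prob x a
  refine Integrable.of_bound measurable_id.aestronglyMeasurable 1 ?_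
  filter_upwards [rker_ae_mem S x a] with ρ h
  rw [Real.norm_eq_abs, abs_le]
  exact ⟨by linarith [h.1], h.2⟩

lemma r_mem (S : CBSetup 𝓧 𝓐) (x : 𝓧) (a : 𝓐) : S.r x a ∈ Set.Icc (0:ℝ) 1 := by
  have := S.rker_prob x a
  rw [S.r_def]
  constructor
  · refine integral_nonneg_of_ae ?_
    filter_upwards [rker_ae_mem S x a] with ρ h using h.1
  · calc ∫ ρ, ρ ∂(S.rker x a) ≤ ∫ _, (1:ℝ) ∂(S.rker x a) := by
          refine integral_mono_ae (integrable_rker S x a) (integrable_const _) ?_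
          filter_upwards [rker_ae_mem S x a] with ρ h using h.2
      _ = 1 := by simp

lemma IsPolicy.le_one {π : 𝓧 → 𝓐 → ℝ} (hπ : IsPolicy π) (x : 𝓧) (a : 𝓐) : π x a ≤ 1 := by
  rw [← hπ.2.1 x]
  exact Finset.single_le_sum (fun b _ => hπ.1 x b) (Finset.mem_univ a)

lemma integrable_weighted (S : CBSetup 𝓧 𝓐) {π : 𝓧 → 𝓐 → ℝ} (hπ : IsPolicy π)
    {c : 𝓧 → 𝓐 → ℝ} (hc : ∀ a, Measurable fun x => c x a) {B : ℝ} (hB : ∀ x a, |c x a| ≤ B) :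
    Integrable (fun x => ∑ a, c x a * (π x a * S.r x a)) S.ν := by
  have := S.ν_prob
  refine integrable_finsetSum _ fun a _ => ?_
  refine Integrable.of_bound
    ((hc a).mul ((hπ.2.2 a).mul (S.r_meas a))).aestronglyMeasurable B ?_
  refine Filter.Eventually.of_forall fun x => ?_
  have h1 := hπ.1 x a
  have h2 := hπ.le_one x a
  have h3 := r_mem S x a
  rw [Real.norm_eq_abs, abs_mul, abs_of_nonneg (mul_nonneg h1 h3.1)]
  calc |c x a| * (π x a * S.r x a) ≤ |c x a| * 1 := by
        gcongr
        exact mul_le_one₀ h2 h3.1 h3.2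
    _ ≤ B := by rw [mul_one]; exact hB x a

/-! ### Exponential moments and tail bounds -/

/-- A pointwise bound on `μ(a|x) exp (s u / (μ(a|x) + γ))` that is affine in `u` gives a bound on the
exponential moment of the IX term: averaging over the action cancels the weight `μ(a|x)`, and
averaging over the reward replaces `u = π(a|x) R` by `π(a|x) r(x,a)`. -/
lemma lintegral_exp_ixTerm_le (S : CBSetup 𝓧 𝓐) {γ s : ℝ} {π : 𝓧 → 𝓐 → ℝ} (hπ : IsPolicy π)
    {c : 𝓧 → 𝓐 → ℝ} (hc : ∀ a, Measurable fun x => c x a) {B : ℝ} (hB : ∀ x a, |c x a| ≤ B)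
    (hb : ∀ x a u, 0 ≤ u → u ≤ 1 →
      S.μb x a * Real.exp (s * (u / (S.μb x a + γ))) ≤ S.μb x a + c x a * u) :
    ∫⁻ ω, ENNReal.ofReal (Real.exp (s * ixTerm S γ π ω)) ∂(obsLaw S)
      ≤ ENNReal.ofReal (Real.exp (∫ x, ∑ a, c x a * (π x a * S.r x a) ∂S.ν)) := by
  have := S.ν_prob
  have hmeas : Measurable fun ω => ENNReal.ofReal (Real.exp (s * ixTerm S γ π ω)) :=
    (Real.measurable_exp.comp ((measurable_ixTerm S γ hπ).const_mul s)).ennreal_ofReal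
  have hnn : ∀ x a u, 0 ≤ u → u ≤ 1 → 0 ≤ S.μb x a + c x a * u := fun x a u h0 h1 =>
    (mul_nonneg (S.μb_nonneg x a) (Real.exp_pos _).le).trans (hb x a u h0 h1)
  have hterm_nn : ∀ x a, 0 ≤ S.μb x a + c x a * (π x a * S.r x a) := fun x a =>
    hnn x a _ (mul_nonneg (hπ.1 x a) (r_mem S x a).1)
      (mul_le_one₀ (hπ.le_one x a) (r_mem S x a).1 (r_mem S x a).2)
  have hsum : ∀ x, ∑ a, (S.μb x a + c x a * (π x a * S.r x a))
      = 1 + ∑ a, c x a * (π x a * S.r x a) := fun x => by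
    rw [Finset.sum_add_distrib, S.μb_sum_one]
  have hint := integrable_weighted S hπ hc hB
  rw [lintegral_obsLaw S hmeas]
  calc ∫⁻ x, ∑ a, ENNReal.ofReal (S.μb x a) *
          ∫⁻ ρ, ENNReal.ofReal (Real.exp (s * ixTerm S γ π (x, a, ρ))) ∂(S.rker x a) ∂S.ν
      ≤ ∫⁻ x, ENNReal.ofReal (1 + ∑ a, c x a * (π x a * S.r x a)) ∂S.ν := by
        refine lintegral_mono fun x => ?_
        dsimp only
        rw [← hsum, ENNReal.ofReal_sum_of_nonneg fun a _ => hterm_nn x a]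
        refine Finset.sum_le_sum fun a _ => ?_
        have := S.rker_prob x a
        have hu : ∀ ρ ∈ Set.Icc (0:ℝ) 1, 0 ≤ π x a * ρ ∧ π x a * ρ ≤ 1 := fun ρ h =>
          ⟨mul_nonneg (hπ.1 x a) h.1, mul_le_one₀ (hπ.le_one x a) h.1 h.2⟩
        have hi : Integrable (fun ρ : ℝ => S.μb x a + c x a * (π x a * ρ)) (S.rker x a) :=
          (integrable_const _).add (((integrable_rker S x a).const_mul _).const_mul _)
        have hval : ∫ ρ, (S.μb x a + c x a * (π x a * ρ)) ∂(S.rker x a)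
            = S.μb x a + c x a * (π x a * S.r x a) := by
          rw [integral_add (integrable_const _)
            (((integrable_rker S x a).const_mul _).const_mul _), integral_const_mul,
            integral_const_mul, S.r_def]
          simp
        rw [← lintegral_const_mul' _ _ ENNReal.ofReal_ne_top, ← hval,
          ofReal_integral_eq_lintegral_ofReal hi]
        · refine lintegral_mono_ae ?_
          filter_upwards [rker_ae_mem S x a] with ρ h
          rw [← ENNReal.ofReal_mul (S.μb_nonneg x a)]
          exact ENNReal.ofReal_le_ofReal (hb x a _ (hu ρ h).1 (hu ρ h).2)
        · filter_upwards [rker_ae_mem S x a] with ρ h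
          exact hnn x a _ (hu ρ h).1 (hu ρ h).2
    _ = ENNReal.ofReal (1 + ∫ x, ∑ a, c x a * (π x a * S.r x a) ∂S.ν) := by
        have hint1 : Integrable (fun x => 1 + ∑ a, c x a * (π x a * S.r x a)) S.ν :=
          (integrable_const _).add hint
        rw [← ofReal_integral_eq_lintegral_ofReal hint1,
          integral_add (integrable_const _) hint]
        · simp
        · refine Filter.Eventually.of_forall fun x => ?_
          change 0 ≤ 1 + ∑ a, c x a * (π x a * S.r x a)
          rw [← hsum]
          exact Finset.sum_nonneg fun a _ => hterm_nn x a
    _ ≤ _ := ENNReal.ofReal_le_ofReal (by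
        rw [add_comm]
        exact Real.add_one_le_exp _)

/-- Chernoff's method for i.i.d. observations. -/
lemma dataLaw_tail_le (S : CBSetup 𝓧 𝓐) (n : ℕ) {g : 𝓧 × 𝓐 × ℝ → ℝ} (hg : Measurable g)
    {b : ℝ} (hm : ∫⁻ ω, ENNReal.ofReal (Real.exp (g ω)) ∂(obsLaw S)
      ≤ ENNReal.ofReal (Real.exp b)) (L : ℝ) :
    dataLaw S n {D | n * b + L ≤ ∑ t, g (D t)} ≤ ENNReal.ofReal (Real.exp (-L)) := by
  have := isProbabilityMeasure_obsLaw S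
  have hge : Measurable fun ω => ENNReal.ofReal (Real.exp (g ω)) :=
    (Real.measurable_exp.comp hg).ennreal_ofReal
  have hprod : ∫⁻ D, ∏ t : Fin n, ENNReal.ofReal (Real.exp (g (D t))) ∂(dataLaw S n)
      ≤ ENNReal.ofReal (Real.exp (n * b)) := by
    have hind : iIndepFun (fun (t : Fin n) (D : Fin n → 𝓧 × 𝓐 × ℝ) =>
        ENNReal.ofReal (Real.exp (g (D t)))) (dataLaw S n) :=
      iIndepFun_pi (X := fun (_ : Fin n) ω => ENNReal.ofReal (Real.exp (g ω)))
        fun _ => hge.aemeasurable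
    rw [lintegral_prod_eq_prod_lintegral_of_indepFun Finset.univ _ hind
      fun t => hge.comp (measurable_pi_apply t)]
    have heval : ∀ t : Fin n, ∫⁻ D, ENNReal.ofReal (Real.exp (g (D t))) ∂(dataLaw S n)
        = ∫⁻ ω, ENNReal.ofReal (Real.exp (g ω)) ∂(obsLaw S) := fun t =>
      (measurePreserving_eval (fun _ : Fin n => obsLaw S) t).lintegral_comp hge
    simp only [heval, Finset.prod_const, Finset.card_univ, Fintype.card_fin]
    calc _ ≤ ENNReal.ofReal (Real.exp b) ^ n := by gcongr
      _ = _ := by rw [← ENNReal.ofReal_pow (Real.exp_pos b).le, ← Real.exp_nat_mul]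
  have hε : ENNReal.ofReal (Real.exp (n * b + L)) ≠ 0 := by
    simpa using Real.exp_pos (n * b + L)
  have hmk := meas_ge_le_lintegral_div (μ := dataLaw S n)
    (f := fun D => ∏ t : Fin n, ENNReal.ofReal (Real.exp (g (D t))))
    (Finset.measurable_prod _ fun t _ => hge.comp (measurable_pi_apply t)).aemeasurable
    hε ENNReal.ofReal_ne_top
  have hset : {D : Fin n → 𝓧 × 𝓐 × ℝ | n * b + L ≤ ∑ t, g (D t)}
      = {D | ENNReal.ofReal (Real.exp (n * b + L))
          ≤ ∏ t : Fin n, ENNReal.ofReal (Real.exp (g (D t)))} := by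
    ext D
    simp only [Set.mem_ofPred_eq]
    rw [← ENNReal.ofReal_prod_of_nonneg fun t _ => (Real.exp_pos _).le, ← Real.exp_sum,
      ENNReal.ofReal_le_ofReal_iff (Real.exp_pos _).le, Real.exp_le_exp]
  rw [hset]
  refine hmk.trans ((ENNReal.div_le_div_right hprod _).trans ?_)
  rw [← ENNReal.ofReal_div_of_pos (Real.exp_pos _), ← Real.exp_sub]
  exact le_of_eq (by congr 2; ring)

/-- The IX estimator exceeds the true value by `L / (2 γ n)` or more with probability at
most `exp (-L)`. -/
lemma ix_upper_tail (S : CBSetup 𝓧 𝓐) (n : ℕ) {γ : ℝ} (hγ : 0 < γ) {π : 𝓧 → 𝓐 → ℝ}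
    (hπ : IsPolicy π) (L : ℝ) :
    dataLaw S n {D | n * (2 * γ * pval S π) + L ≤ ∑ t, 2 * γ * ixTerm S γ π (D t)}
      ≤ ENNReal.ofReal (Real.exp (-L)) := by
  refine dataLaw_tail_le S n ((measurable_ixTerm S γ hπ).const_mul _) ?_ L
  have h := lintegral_exp_ixTerm_le S (γ := γ) (s := 2 * γ) hπ (c := fun _ _ => 2 * γ)
    (fun _ => measurable_const) (B := |2 * γ|) (fun _ _ => le_rfl)
    (fun x a u h0 h1 => mul_exp_ix_le (S.μb_nonneg x a) hγ h0 h1)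
  simp_rw [← Finset.mul_sum, integral_const_mul] at h
  exact h

/-- With probability at least `1 - exp (-L)`, the IX estimator underestimates the true value by at
most `2 γ C_γ(π) + L / (2 γ n)`. -/
lemma ix_lower_tail (S : CBSetup 𝓧 𝓐) (n : ℕ) {γ : ℝ} (hγ : 0 < γ) {π : 𝓧 → 𝓐 → ℝ}
    (hπ : IsPolicy π) (L : ℝ) :
    dataLaw S n {D | n * (4 * γ ^ 2 * covγ S γ π - 2 * γ * pval S π) + L
        ≤ ∑ t, -(2 * γ) * ixTerm S γ π (D t)}
      ≤ ENNReal.ofReal (Real.exp (-L)) := by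
  refine dataLaw_tail_le S n ((measurable_ixTerm S γ hπ).const_mul _) ?_ L
  have hinv_meas : ∀ a, Measurable fun x => 1 / (S.μb x a + γ) := fun a =>
    measurable_const.div ((S.μb_meas a).add_const γ)
  have hinv : ∀ x a, |1 / (S.μb x a + γ)| ≤ 1 / γ := fun x a => by
    have := S.μb_nonneg x a
    rw [abs_of_nonneg (by positivity)]
    gcongr
    linarith
  have hcov := integrable_weighted S hπ hinv_meas hinv
  have hval := integrable_weighted S hπ (c := fun _ _ => 1)
    (fun _ => measurable_const) (B := 1) (by simp)
  have h := lintegral_exp_ixTerm_le S (γ := γ) (s := -(2 * γ)) hπ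
    (c := fun x a => 4 * γ ^ 2 / (S.μb x a + γ) - 2 * γ)
    (fun a => (measurable_const.div ((S.μb_meas a).add_const γ)).sub_const _)
    (B := 4 * γ ^ 2 * (1 / γ) + 2 * γ) (fun x a => by
      refine (abs_sub _ _).trans (add_le_add ?_ (abs_of_pos (by positivity)).le)
      rw [← mul_one_div, abs_mul, abs_of_nonneg (by positivity : 0 ≤ 4 * γ ^ 2)]
      exact mul_le_mul_of_nonneg_left (hinv x a) (by positivity))
    (fun x a u h0 h1 => mul_exp_neg_ix_le (S.μb_nonneg x a) hγ h0 h1)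
  have hI : ∫ x, ∑ a, (4 * γ ^ 2 / (S.μb x a + γ) - 2 * γ) * (π x a * S.r x a) ∂S.ν
      = 4 * γ ^ 2 * covγ S γ π - 2 * γ * pval S π := by
    have e1 : covγ S γ π = ∫ x, ∑ a, 1 / (S.μb x a + γ) * (π x a * S.r x a) ∂S.ν := by
      simp only [covγ, one_div_mul_eq_div]
    have e2 : pval S π = ∫ x, ∑ a, 1 * (π x a * S.r x a) ∂S.ν := by
      simp only [pval, one_mul]
    rw [e1, e2, ← integral_const_mul, ← integral_const_mul,
      ← integral_sub (hcov.const_mul _) (hval.const_mul _)]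
    congr 1
    funext x
    rw [Finset.mul_sum, Finset.mul_sum, ← Finset.sum_sub_distrib]
    exact Finset.sum_congr rfl fun a _ => by ring
  rw [hI] at h
  exact h

/-- Theorem 1, second part: with the IX parameter set to
`γ = √(log(2|Π|/δ)/n)`, with probability at least `1-δ` the PIWO-IX policy satisfies,
simultaneously for every comparator `π' ∈ Pol`,
`v(π') - v(hatπ D) ≤ (2 C_γ(π') + 1) √(log(2|Π|/δ)/n)`. -/
theorem piwo_ix_regret_tuned
    (S : CBSetup 𝓧 𝓐) {n : ℕ} (hn : 0 < n) (γ δ : ℝ)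
    (hδ0 : 0 < δ) (hδ1 : δ < 1)
    (Pol : Finset (𝓧 → 𝓐 → ℝ)) (hne : Pol.Nonempty)
    (hpol : ∀ π ∈ Pol, IsPolicy π)
    (hγdef : γ = Real.sqrt (Real.log (2 * (Pol.card : ℝ) / δ) / n))
    (hatπ : (Fin n → 𝓧 × 𝓐 × ℝ) → 𝓧 → 𝓐 → ℝ)
    (hmem : ∀ D, hatπ D ∈ Pol)
    (hmax : ∀ D, ∀ π ∈ Pol, ixEst S γ π D ≤ ixEst S γ (hatπ D) D) :
    ENNReal.ofReal (1 - δ) ≤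
      dataLaw S n {D : Fin n → 𝓧 × 𝓐 × ℝ | ∀ π' ∈ Pol,
        pval S π' - pval S (hatπ D) ≤
          (2 * covγ S γ π' + 1) * Real.sqrt (Real.log (2 * (Pol.card : ℝ) / δ) / n)} := by
  classical
  have := isProbabilityMeasure_obsLaw S
  have : IsProbabilityMeasure (dataLaw S n) := by unfold dataLaw; infer_instance
  have hnR : (0:ℝ) < n := by exact_mod_cast hn
  have hN : (1:ℝ) ≤ Pol.card := by exact_mod_cast hne.card_pos
  set L := Real.log (2 * (Pol.card : ℝ) / δ) with hL
  have hLpos : 0 < L := Real.log_pos (by rw [lt_div_iff₀ hδ0]; linarith)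
  have hγ : 0 < γ := hγdef ▸ Real.sqrt_pos.2 (by positivity)
  have hγL : n * γ ^ 2 = L := by
    rw [hγdef, Real.sq_sqrt (by positivity)]; field_simp
  have hexp : Real.exp (-L) = δ / (2 * Pol.card) := by
    rw [hL, Real.exp_neg, Real.exp_log (by positivity), inv_div]
  rw [← hγdef]
  set U : (𝓧 → 𝓐 → ℝ) → Set (Fin n → 𝓧 × 𝓐 × ℝ) := fun π =>
    {D | n * (2 * γ * pval S π) + L ≤ ∑ t, 2 * γ * ixTerm S γ π (D t)} with hU
  set V : (𝓧 → 𝓐 → ℝ) → Set (Fin n → 𝓧 × 𝓐 × ℝ) := fun π =>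
    {D | n * (4 * γ ^ 2 * covγ S γ π - 2 * γ * pval S π) + L
        ≤ ∑ t, -(2 * γ) * ixTerm S γ π (D t)} with hV
  set bad : Set (Fin n → 𝓧 × 𝓐 × ℝ) := ⋃ π ∈ Pol, (U π ∪ V π) with hbad
  have hbad_le : dataLaw S n bad ≤ ENNReal.ofReal δ := by
    calc dataLaw S n bad ≤ ∑ π ∈ Pol, dataLaw S n (U π ∪ V π) := measure_biUnion_finset_le _ _
      _ ≤ ∑ π ∈ Pol, ENNReal.ofReal (δ / Pol.card) := by
          refine Finset.sum_le_sum fun π hπ => (measure_union_le _ _).trans ?_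
          refine (add_le_add (ix_upper_tail S n hγ (hpol π hπ) L)
            (ix_lower_tail S n hγ (hpol π hπ) L)).trans ?_
          rw [hexp, ← ENNReal.ofReal_add (by positivity) (by positivity)]
          exact le_of_eq (by congr 1; field_simp; ring)
      _ = ENNReal.ofReal δ := by
          rw [Finset.sum_const, nsmul_eq_mul, ← ENNReal.ofReal_natCast,
            ← ENNReal.ofReal_mul (by positivity)]
          congr 1
          field_simp
  have hsub : badᶜ ⊆ {D : Fin n → 𝓧 × 𝓐 × ℝ | ∀ π' ∈ Pol,
      pval S π' - pval S (hatπ D) ≤ (2 * covγ S γ π' + 1) * γ} := by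
    intro D hD π' hπ'
    simp only [hbad, Set.mem_compl_iff, Set.mem_iUnion, Set.mem_union, not_exists, not_or] at hD
    have h1 := (hD _ (hmem D)).1
    have h2 := (hD π' hπ').2
    have h3 := hmax D π' hπ'
    simp only [hU, hV, Set.mem_ofPred_eq, not_le, ← Finset.mul_sum] at h1 h2
    rw [ixEst, ixEst, div_le_div_iff_of_pos_right hnR] at h3
    rw [← hγL] at h1 h2
    have h4 := mul_le_mul_of_nonneg_left h3 (by positivity : 0 ≤ 2 * γ)
    -- The sum of the two deviation bounds carries the common factor `2 γ n`.
    have h5 : 2 * γ * n * (pval S π' - pval S (hatπ D))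
        ≤ 2 * γ * n * ((2 * covγ S γ π' + 1) * γ) := by nlinarith
    exact le_of_mul_le_mul_left h5 (by positivity)
  -- The selection `hatπ` is arbitrary, so the target event need not be measurable; its outer measure
  -- is bounded below by that of `badᶜ`.
  refine le_trans ?_ (measure_mono hsub)
  rw [ENNReal.ofReal_sub _ hδ0.le, ENNReal.ofReal_one, tsub_le_iff_left]
  calc (1 : ENNReal) = dataLaw S n (bad ∪ badᶜ) := by rw [Set.union_compl_self, measure_univ]
    _ ≤ dataLaw S n bad + dataLaw S n badᶜ := measure_union_le _ _
    _ ≤ _ := by gcongr
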